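/- arXiv:1511.01768 — 3 statements merged into one kernel-verified Lean document; each statement's English description precedes it below -/
import Mathlib

section
/- Let x, y and z be three further pairwise distinct elements of Q that are different from all of x_1, y_1, z_1, …, x_l, y_l, z_l (so 3l + 3 ≤ n). Then the number of admissible subsets S of Q with y ∈ S, z ∈ S and x ∉ S equals 7^l * 2^(n-3l-3), which is exactly one eighth of the total number of admissible subsets. -/
/-!
Counts of subsets are multiplicative: if `A` and `B` are disjoint, a subset of `A ∪ B` is the same
as a subset of `A` together with a subset of `B`, so a condition that only concerns the part in `A`
and one that only concerns the part in `B` can be counted separately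
(`card_filter_powerset_of_subset`). Of the eight subsets of a triple exactly one contains the last
two elements and not the first (`card_filter_bushy`), and the other seven satisfy the corresponding
constraint. Splitting off the triples `(xs i, ys i, zs i)` one by one gives `7 ^ l * 2 ^ (n - 3 l)`
admissible subsets (`card_filter_admissible`). Splitting off the fresh triple `{x, y, z}`, whose
subsets are not restricted by admissibility, gives both claims: the bushy condition keeps one of the
eight subsets of that triple.
-/

/-- Splitting `Q` into `A` and `Q \ A`: if `P` depends only on the part of a set in `A` and `R` only
on the part outside `A`, the number of subsets of `Q` satisfying both is a product. -/
theorem card_filter_powerset_of_subset {α : Type*} [DecidableEq α] {Q A : Finset α} (hA : A ⊆ Q)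
    (P R : Finset α → Prop) [DecidablePred P] [DecidablePred R]
    (hP : ∀ S, P (S ∩ A) ↔ P S) (hR : ∀ S, R (S \ A) ↔ R S) :
    (Q.powerset.filter (fun S => P S ∧ R S)).card
      = (A.powerset.filter P).card * ((Q \ A).powerset.filter R).card := by
  rw [← Finset.card_product]
  refine Finset.card_nbij' (fun S => (S ∩ A, S \ A)) (fun p => p.1 ∪ p.2) ?_ ?_ ?_ ?_
  · intro S hS
    simp only [Finset.coe_filter, Set.mem_ofPred_eq, Finset.mem_powerset] at hS
    simp only [Finset.coe_product, Set.mem_prod, Finset.coe_filter, Set.mem_ofPred_eq,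
      Finset.mem_powerset, hP, hR]
    exact ⟨⟨Finset.inter_subset_right, hS.2.1⟩, Finset.sdiff_subset_sdiff hS.1 le_rfl, hS.2.2⟩
  · rintro ⟨S, T⟩ hST
    simp only [Finset.coe_product, Set.mem_prod, Finset.coe_filter, Set.mem_ofPred_eq,
      Finset.mem_powerset] at hST
    obtain ⟨⟨hS, hPS⟩, hT, hRT⟩ := hST
    have h1 : (S ∪ T) ∩ A = S := by grind
    have h2 : (S ∪ T) \ A = T := by grind
    simp only [Finset.coe_filter, Set.mem_ofPred_eq, Finset.mem_powerset]
    refine ⟨by grind, ?_, ?_⟩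
    · rwa [← hP, h1]
    · rwa [← hR, h2]
  · intro S _
    grind
  · rintro ⟨S, T⟩ hST
    simp only [Finset.coe_product, Set.mem_prod, Finset.coe_filter, Set.mem_ofPred_eq,
      Finset.mem_powerset] at hST
    obtain ⟨⟨hS, -⟩, hT, -⟩ := hST
    simp only [Prod.mk.injEq]
    constructor <;> grind

theorem card_filter_bushy {α : Type*} [DecidableEq α] {a b c : α} (hab : a ≠ b) (hac : a ≠ c) :
    (({a, b, c} : Finset α).powerset.filter (fun S => b ∈ S ∧ c ∈ S ∧ a ∉ S)).card = 1 := by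
  rw [Finset.card_eq_one]
  refine ⟨{b, c}, ?_⟩
  ext S
  simp only [Finset.mem_filter, Finset.mem_powerset, Finset.mem_singleton]
  constructor
  · rintro ⟨h, hb, hc, ha⟩
    grind
  · rintro rfl
    grind

theorem card_filter_constraint {α : Type*} [DecidableEq α] {a b c : α}
    (hab : a ≠ b) (hac : a ≠ c) (hbc : b ≠ c) :
    (({a, b, c} : Finset α).powerset.filter (fun S => b ∈ S → c ∈ S → a ∈ S)).card = 7 := by
  have h := Finset.card_filter_add_card_filter_not (s := ({a, b, c} : Finset α).powerset)
    (fun S => b ∈ S ∧ c ∈ S ∧ a ∉ S)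
  rw [card_filter_bushy hab hac, Finset.card_powerset,
    Finset.card_eq_three.2 ⟨a, b, c, hab, hac, hbc, rfl⟩] at h
  have h' : ({a, b, c} : Finset α).powerset.filter (fun S => b ∈ S → c ∈ S → a ∈ S)
      = ({a, b, c} : Finset α).powerset.filter (fun S => ¬ (b ∈ S ∧ c ∈ S ∧ a ∉ S)) := by
    refine Finset.filter_congr fun S _ => ?_
    tauto
  rw [h']
  omega

/-- The total number of admissible subsets, by induction on the number of constraints. -/
theorem card_filter_admissible {α : Type*} [DecidableEq α] (l : ℕ) :
    ∀ (Q : Finset α) (xs ys zs : Fin l → α),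
      (∀ i, xs i ∈ Q) → (∀ i, ys i ∈ Q) → (∀ i, zs i ∈ Q) →
      Function.Injective (Sum.elim (Sum.elim xs ys) zs) →
      (Q.powerset.filter (fun S => ∀ i, ys i ∈ S → zs i ∈ S → xs i ∈ S)).card
        = 7 ^ l * 2 ^ (Q.card - 3 * l) := by
  induction l with
  | zero =>
    intro Q xs ys zs _ _ _ _
    simp
  | succ l ih =>
    intro Q xs ys zs hxs hys hzs hinj
    have hxy : ∀ i j, xs i ≠ ys j := fun i j h => by
      simpa using @hinj (.inl (.inl i)) (.inl (.inr j)) h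
    have hxz : ∀ i j, xs i ≠ zs j := fun i j h => by
      simpa using @hinj (.inl (.inl i)) (.inr j) h
    have hyz : ∀ i j, ys i ≠ zs j := fun i j h => by
      simpa using @hinj (.inl (.inr i)) (.inr j) h
    have hxx : ∀ i : Fin l, xs i.succ ≠ xs 0 := fun i h => by
      simpa using @hinj (.inl (.inl i.succ)) (.inl (.inl 0)) h
    have hyy : ∀ i : Fin l, ys i.succ ≠ ys 0 := fun i h => by
      simpa using @hinj (.inl (.inr i.succ)) (.inl (.inr 0)) h
    have hzz : ∀ i : Fin l, zs i.succ ≠ zs 0 := fun i h => by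
      simpa using @hinj (.inr i.succ) (.inr 0) h
    have hxA : ∀ i : Fin l, xs i.succ ∉ ({xs 0, ys 0, zs 0} : Finset α) := fun i => by
      simp [hxx, hxy, hxz]
    have hyA : ∀ i : Fin l, ys i.succ ∉ ({xs 0, ys 0, zs 0} : Finset α) := fun i => by
      simp [hyy, (hxy _ _).symm, hyz]
    have hzA : ∀ i : Fin l, zs i.succ ∉ ({xs 0, ys 0, zs 0} : Finset α) := fun i => by
      simp [hzz, (hxz _ _).symm, (hyz _ _).symm]
    have hA : ({xs 0, ys 0, zs 0} : Finset α) ⊆ Q := by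
      simp [Finset.insert_subset_iff, hxs, hys, hzs]
    have hinj' : Function.Injective
        (Sum.elim (Sum.elim (fun i : Fin l => xs i.succ) (fun i : Fin l => ys i.succ))
          (fun i : Fin l => zs i.succ)) := by
      have hs := Fin.succ_injective l
      have h := hinj.comp ((hs.sumMap hs).sumMap hs)
      convert h using 1
      ext ((i | i) | i) <;> rfl
    have hsplit := card_filter_powerset_of_subset hA
      (fun S => ys 0 ∈ S → zs 0 ∈ S → xs 0 ∈ S)
      (fun S => ∀ i : Fin l, ys i.succ ∈ S → zs i.succ ∈ S → xs i.succ ∈ S)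
      (fun S => by simp) (fun S => by simp only [Finset.mem_sdiff, hxA, hyA, hzA]; simp)
    simp only [Fin.forall_fin_succ (n := l)]
    rw [hsplit, card_filter_constraint (hxy 0 0) (hxz 0 0) (hyz 0 0),
      ih (Q \ {xs 0, ys 0, zs 0}) (fun i => xs i.succ) (fun i => ys i.succ) (fun i => zs i.succ)
        (fun i => Finset.mem_sdiff.2 ⟨hxs _, hxA i⟩) (fun i => Finset.mem_sdiff.2 ⟨hys _, hyA i⟩)
        (fun i => Finset.mem_sdiff.2 ⟨hzs _, hzA i⟩) hinj',
      Finset.card_sdiff_of_subset hA,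
      Finset.card_eq_three.2 ⟨_, _, _, hxy 0 0, hxz 0 0, hyz 0 0, rfl⟩,
      Nat.sub_sub, show 3 + 3 * l = 3 * (l + 1) by ring]
    ring

/-- `Q` is a finite set with `n` elements, with `l` constraints
`(xs i, ys i, zs i)` on pairwise distinct tables; a subset `S ⊆ Q` is admissible if
`ys i ∈ S → zs i ∈ S → xs i ∈ S` for all `i`. Let `x, y, z` be three further pairwise
distinct elements of `Q` distinct from all `xs i, ys i, zs i`. Then the number of
admissible subsets `S` with `y ∈ S`, `z ∈ S` and `x ∉ S` equals
`7 ^ l * 2 ^ (n - 3l - 3)`, which is exactly one eighth of the total number of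
admissible subsets. -/
theorem admissible_count_bushy_eighth {α : Type*} [DecidableEq α]
    (Q : Finset α) (n l : ℕ) (hn : Q.card = n)
    (xs ys zs : Fin l → α)
    (hxs : ∀ i, xs i ∈ Q) (hys : ∀ i, ys i ∈ Q) (hzs : ∀ i, zs i ∈ Q)
    (hdistinct : Function.Injective (Sum.elim (Sum.elim xs ys) zs))
    (x y z : α) (hx : x ∈ Q) (hy : y ∈ Q) (hz : z ∈ Q)
    (hxy : x ≠ y) (hxz : x ≠ z) (hyz : y ≠ z)
    (hxfresh : ∀ i, x ≠ xs i ∧ x ≠ ys i ∧ x ≠ zs i)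
    (hyfresh : ∀ i, y ≠ xs i ∧ y ≠ ys i ∧ y ≠ zs i)
    (hzfresh : ∀ i, z ≠ xs i ∧ z ≠ ys i ∧ z ≠ zs i) :
    (Q.powerset.filter
        (fun S => (∀ i, ys i ∈ S → zs i ∈ S → xs i ∈ S) ∧ y ∈ S ∧ z ∈ S ∧ x ∉ S)).card
      = 7 ^ l * 2 ^ (n - 3 * l - 3)
    ∧ 8 * (Q.powerset.filter
        (fun S => (∀ i, ys i ∈ S → zs i ∈ S → xs i ∈ S) ∧ y ∈ S ∧ z ∈ S ∧ x ∉ S)).card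
      = (Q.powerset.filter (fun S => ∀ i, ys i ∈ S → zs i ∈ S → xs i ∈ S)).card := by
  have hA : ({x, y, z} : Finset α) ⊆ Q := by
    simp [Finset.insert_subset_iff, hx, hy, hz]
  have hcard : ({x, y, z} : Finset α).card = 3 :=
    Finset.card_eq_three.2 ⟨x, y, z, hxy, hxz, hyz, rfl⟩
  have hxA : ∀ i, xs i ∉ ({x, y, z} : Finset α) := fun i => by
    simp [(hxfresh i).1.symm, (hyfresh i).1.symm, (hzfresh i).1.symm]
  have hyA : ∀ i, ys i ∉ ({x, y, z} : Finset α) := fun i => by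
    simp [(hxfresh i).2.1.symm, (hyfresh i).2.1.symm, (hzfresh i).2.1.symm]
  have hzA : ∀ i, zs i ∉ ({x, y, z} : Finset α) := fun i => by
    simp [(hxfresh i).2.2.symm, (hyfresh i).2.2.symm, (hzfresh i).2.2.symm]
  have hR : ∀ S : Finset α, (∀ i, ys i ∈ S \ {x, y, z} → zs i ∈ S \ {x, y, z} →
      xs i ∈ S \ {x, y, z}) ↔ ∀ i, ys i ∈ S → zs i ∈ S → xs i ∈ S := fun S => by
    simp only [Finset.mem_sdiff, hxA, hyA, hzA]; simp
  have hbushy := card_filter_powerset_of_subset hA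
    (fun S => y ∈ S ∧ z ∈ S ∧ x ∉ S)
    (fun S => ∀ i, ys i ∈ S → zs i ∈ S → xs i ∈ S) (fun S => by simp) hR
  have htotal := card_filter_powerset_of_subset hA
    (fun _ => True)
    (fun S => ∀ i, ys i ∈ S → zs i ∈ S → xs i ∈ S) (fun S => by simp) hR
  have hadm := card_filter_admissible l (Q \ {x, y, z}) xs ys zs
    (fun i => Finset.mem_sdiff.2 ⟨hxs i, hxA i⟩) (fun i => Finset.mem_sdiff.2 ⟨hys i, hyA i⟩)
    (fun i => Finset.mem_sdiff.2 ⟨hzs i, hzA i⟩) hdistinct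
  rw [Finset.card_sdiff_of_subset hA, hcard, hn, Nat.sub_right_comm] at hadm
  rw [card_filter_bushy hxy hxz, one_mul] at hbushy
  simp only [true_and, Finset.filter_true, Finset.card_powerset, hcard] at htotal
  simp only [and_comm (b := y ∈ _ ∧ z ∈ _ ∧ x ∉ _)]
  rw [hbushy, htotal]
  exact ⟨hadm, by norm_num⟩
end

section
/- The sum, over all admissible subsets S of Q, of the cardinality |S| equals n * 3^l * 2^(n-2l-1). Consequently, the number of pairs (S, t) with S an admissible subset of Q and t ∈ S is at most n * 3^l * 2^(n-2l). -/
/-!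
The proof is by induction on the number `l` of constraints. Fix one constraint `(a, b)` and let
`Q'` be `Q` without `a` and `b`. The admissible subsets of `Q` are exactly `S`, `S ∪ {a}` and
`S ∪ {a, b}`, with `S` ranging over the subsets of `Q'` admissible for the remaining constraints
(`sum_admissible_succ`). Thus the number of admissible sets triples, and the sum `s` of their
cardinalities becomes `3 * s + 3 * c`, where `c` is the number of admissible subsets of `Q'`.
Hence the number of admissible sets is `3 ^ l * 2 ^ (n - 2 * l)`, and their average size stays equal
to `n / 2`, as it is for the full power set (`two_mul_sum_card_admissible`).
-/

/-- The subsets of `Q` that satisfy all the precedence constraints `y i ∈ S → x i ∈ S`. -/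
def admissibleSets {α : Type*} [DecidableEq α] (Q : Finset α) {l : ℕ} (x y : Fin l → α) :
    Finset (Finset α) :=
  Q.powerset.filter (fun S => ∀ i, y i ∈ S → x i ∈ S)

/-- Summation over admissible sets, split by the trace on the first constrained pair: of the four
possible traces only `{y 0}` is forbidden. -/
lemma sum_admissible_succ {α : Type*} [DecidableEq α] {l : ℕ} (Q : Finset α)
    (x y : Fin (l + 1) → α) (hdistinct : Function.Injective (Sum.elim x y))
    (hx : x 0 ∉ Q) (hy : y 0 ∉ Q) (f : Finset α → ℕ) :
    ∑ S ∈ admissibleSets (insert (x 0) (insert (y 0) Q)) x y, f S =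
      ∑ S ∈ admissibleSets Q (fun i => x i.succ) (fun i => y i.succ),
        (f S + f (insert (x 0) S) + f (insert (x 0) (insert (y 0) S))) := by
  have hxy : ∀ i j, x i ≠ y j := fun i j h => by
    simpa using @hdistinct (Sum.inl i) (Sum.inr j) h
  have hxx : ∀ i : Fin l, x i.succ ≠ x 0 := fun i h => by
    simpa using @hdistinct (Sum.inl i.succ) (Sum.inl 0) h
  have hyy : ∀ i : Fin l, y i.succ ≠ y 0 := fun i h => by
    simpa using @hdistinct (Sum.inr i.succ) (Sum.inr 0) h
  unfold admissibleSets
  rw [Finset.sum_filter, Finset.sum_filter,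
    Finset.sum_powerset_insert (by simp [hxy, hx]),
    Finset.sum_powerset_insert hy, Finset.sum_powerset_insert hy,
    ← Finset.sum_add_distrib, ← Finset.sum_add_distrib, ← Finset.sum_add_distrib]
  refine Finset.sum_congr rfl fun S hS => ?_
  have hS' := Finset.mem_powerset.mp hS
  have hxS : x 0 ∉ S := fun h => hx (hS' h)
  have hyS : y 0 ∉ S := fun h => hy (hS' h)
  simp only [Fin.forall_fin_succ, Finset.mem_insert, hxS, hyS, hxy, (hxy _ _).symm, hxx, hyy,
    false_or, or_false, not_false_eq_true, true_and, imp_false,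
    not_true_eq_false, false_and, if_false, forall_const, imp_true_iff]
  split_ifs <;> simp [add_assoc]

/-- Counting admissible sets, together with the fact that their average size is `Q.card / 2`. The
inequality `2 * l ≤ Q.card` makes the truncated subtraction in the exponent a true one. -/
lemma two_mul_sum_card_admissible {α : Type*} [DecidableEq α] {l : ℕ} :
    ∀ (Q : Finset α) (x y : Fin l → α), (∀ i, x i ∈ Q) → (∀ i, y i ∈ Q) →
      Function.Injective (Sum.elim x y) →
      2 * l ≤ Q.card ∧
      (admissibleSets Q x y).card = 3 ^ l * 2 ^ (Q.card - 2 * l) ∧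
      2 * ∑ S ∈ admissibleSets Q x y, S.card = Q.card * (admissibleSets Q x y).card := by
  induction l with
  | zero =>
    intro Q x y _ _ _
    have h : admissibleSets Q x y = Q.powerset := by simp [admissibleSets]
    refine ⟨by simp, by simp [h], ?_⟩
    rw [h, Finset.sum_powerset_apply_card (fun k => k), Finset.card_powerset]
    simp only [smul_eq_mul]
    rw [Finset.sum_congr rfl fun k _ => mul_comm (Q.card.choose k) k,
      Nat.sum_range_mul_choose]
    cases Q.card with
    | zero => simp
    | succ m => simp [pow_succ]; ring
  | succ l ih =>
    intro Q x y hx hy hd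
    have hxy : ∀ i j, x i ≠ y j := fun i j h => by
      simpa using @hd (Sum.inl i) (Sum.inr j) h
    have hxx : ∀ i j, x i = x j → i = j := fun i j h => by
      simpa using @hd (Sum.inl i) (Sum.inl j) h
    have hyy : ∀ i j, y i = y j → i = j := fun i j h => by
      simpa using @hd (Sum.inr i) (Sum.inr j) h
    obtain ⟨R, hR⟩ : ∃ R, R = (Q.erase (x 0)).erase (y 0) := ⟨_, rfl⟩
    have hxR : x 0 ∉ R := by simp [hR]
    have hyR : y 0 ∉ R := by simp [hR]
    have hQ : Q = insert (x 0) (insert (y 0) R) := by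
      rw [hR, Finset.insert_erase (by simp [hy, (hxy 0 0).symm]), Finset.insert_erase (hx 0)]
    have hcard : Q.card = R.card + 2 := by
      rw [hQ, Finset.card_insert_of_notMem (by simp [hxy, hxR]),
        Finset.card_insert_of_notMem hyR]
    obtain ⟨h1, h2, h3⟩ := ih R (fun i => x i.succ) (fun i => y i.succ)
      (fun i => by
        simpa [hR, hxy, hx] using fun h => Fin.succ_ne_zero i (hxx _ _ h))
      (fun i => by
        simpa [hR, (hxy _ _).symm, hy] using fun h => Fin.succ_ne_zero i (hyy _ _ h))
      (by
        rintro (i | i) (j | j) h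
        · simpa using hxx _ _ h
        · exact absurd h (hxy _ _)
        · exact absurd h.symm (hxy _ _)
        · simpa using hyy _ _ h)
    have key := sum_admissible_succ R x y hd hxR hyR
    rw [← hQ] at key
    have hc : (admissibleSets Q x y).card =
        3 * (admissibleSets R (fun i => x i.succ) (fun i => y i.succ)).card := by
      have := key (fun _ => 1)
      simp only [Finset.sum_const, smul_eq_mul] at this
      omega
    have hs : ∑ S ∈ admissibleSets Q x y, S.card =
        3 * ∑ S ∈ admissibleSets R (fun i => x i.succ) (fun i => y i.succ), S.card +
        3 * (admissibleSets R (fun i => x i.succ) (fun i => y i.succ)).card := by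
      rw [key, Finset.mul_sum, Finset.card_eq_sum_ones, Finset.mul_sum, ← Finset.sum_add_distrib]
      refine Finset.sum_congr rfl fun S hS => ?_
      have hS' : S ⊆ R := Finset.mem_powerset.mp (Finset.mem_filter.mp hS).1
      have hyS : y 0 ∉ S := fun h => hyR (hS' h)
      have hxS : x 0 ∉ S := fun h => hxR (hS' h)
      rw [Finset.card_insert_of_notMem hxS,
        Finset.card_insert_of_notMem (by simp [hxy, hxS]), Finset.card_insert_of_notMem hyS]
      ring
    refine ⟨by omega, ?_, ?_⟩
    · rw [hc, h2, hcard, show R.card + 2 - 2 * (l + 1) = R.card - 2 * l by omega]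
      ring
    · rw [hs, hc, hcard]
      linear_combination 3 * h3

/-- `Q` is a finite set with `n` elements, with `l` precedence constraints
`(x i, y i)` on pairwise distinct tables; a subset `S ⊆ Q` is admissible if
`y i ∈ S → x i ∈ S` for all `i`. The sum, over all admissible subsets `S` of `Q`, of
the cardinality `|S|` equals `n * 3 ^ l * 2 ^ (n - 2l - 1)`. Consequently, the number
of pairs `(S, t)` with `S` an admissible subset and `t ∈ S` is at most
`n * 3 ^ l * 2 ^ (n - 2l)`. -/
theorem admissible_sum_card_linear {α : Type*} [DecidableEq α]
    (Q : Finset α) (n l : ℕ) (hn : Q.card = n)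
    (x y : Fin l → α) (hx : ∀ i, x i ∈ Q) (hy : ∀ i, y i ∈ Q)
    (hdistinct : Function.Injective (Sum.elim x y)) :
    ((∑ S ∈ Q.powerset.filter (fun S => ∀ i, y i ∈ S → x i ∈ S), S.card : ℕ) : ℚ)
        = n * 3 ^ l * (2 : ℚ) ^ ((n : ℤ) - 2 * l - 1)
    ∧ ((Q.powerset.filter (fun S => ∀ i, y i ∈ S → x i ∈ S)).sigma
        (fun S => S)).card ≤ n * 3 ^ l * 2 ^ (n - 2 * l) := by
  obtain ⟨h1, h2, h3⟩ := two_mul_sum_card_admissible Q x y hx hy hdistinct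
  rw [h2, hn] at h3
  rw [hn] at h1
  change ((∑ S ∈ admissibleSets Q x y, S.card : ℕ) : ℚ) = _ ∧
    ((admissibleSets Q x y).sigma (fun S => S)).card ≤ _
  constructor
  · have hpow : (2 : ℚ) ^ ((n : ℤ) - 2 * l - 1) = 2 ^ (n - 2 * l) / 2 := by
      rw [zpow_sub_one₀ two_ne_zero, ← zpow_natCast, Nat.cast_sub h1]
      push_cast
      rfl
    have h3' : (2 : ℚ) * ((∑ S ∈ admissibleSets Q x y, S.card : ℕ) : ℚ) =
        n * (3 ^ l * 2 ^ (n - 2 * l)) := by exact_mod_cast h3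
    rw [hpow]
    linear_combination h3' / 2
  · rw [Finset.card_sigma, mul_assoc]
    omega
end

section
/- Let Q be a finite set with n ≥ 4 elements and let x ≠ y be two elements of Q. Partition the power set of Q into the four classes determined by membership of x and y (both in the set, only x, only y, neither); each class has 2^(n-2) members. Suppose A₁ and A₂ are subsets of the power set of Q, each of which is a union of some of these four classes, and suppose they cover the left-deep plan space: for every duplicate-free list L enumerating all of Q there is an i ∈ {1,2} such that every prefix of L with at least two elements has its element set in A_i. Then for some i ∈ {1,2}, A_i contains at least three of the four classes; in particular max(|A₁|, |A₂|) ≥ 3 · 2^(n-2) = (3/4) · 2^n. Hence splitting the linear plan space between two workers by such a class-based partitioning cannot reduce the maximal number of join results per worker by less than factor 3/4. -/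
/-!
A single join order suffices. Since `Q` has at least four elements, it has a join order
`a, b, x, y, …` with `a, b ∉ {x, y}`. Its prefixes of lengths 2, 3 and 4 meet the classes
"neither", "only `x`" and "both", so the worker that generates this plan holds these three classes.
Each class is in bijection with the power set of `Q \ {x, y}`, and distinct classes are disjoint,
which gives the cardinality bound.
-/

/-- The members of the power set of `Q` whose membership pattern at `x` and `y` is `bc`. -/
def patternClass {α : Type*} [DecidableEq α] (Q : Finset α) (x y : α) (bc : Bool × Bool) :
    Finset (Finset α) :=
  Q.powerset.filter (fun S => ((x ∈ S) ↔ bc.1 = true) ∧ ((y ∈ S) ↔ bc.2 = true))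

/-- Removing `x` and `y` is a bijection from a class onto the power set of `Q \ {x, y}`. -/
lemma card_patternClass {α : Type*} [DecidableEq α] (Q : Finset α) (x y : α)
    (hx : x ∈ Q) (hy : y ∈ Q) (hxy : x ≠ y) (bc : Bool × Bool) :
    (patternClass Q x y bc).card = 2 ^ (Q.card - 2) := by
  have hc : (Q \ {x, y}).card = Q.card - 2 := by
    rw [Finset.card_sdiff_of_subset (by simp [Finset.insert_subset_iff, hx, hy]),
      Finset.card_pair hxy]
  rw [← hc, ← Finset.card_powerset]
  refine Finset.card_nbij' (fun S => S \ {x, y})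
    (fun T => T ∪ ((if bc.1 then {x} else ∅) ∪ (if bc.2 then {y} else ∅))) ?_ ?_ ?_ ?_
  · intro S hS
    simp only [patternClass, Finset.coe_filter, Finset.mem_powerset, Set.mem_ofPred_eq] at hS
    simp only [Finset.coe_powerset, Set.mem_preimage, Set.mem_powerset_iff, Finset.coe_subset]
    exact Finset.sdiff_subset_sdiff hS.1 le_rfl
  · intro T hT
    have hT' : T ⊆ Q \ {x, y} := Finset.mem_powerset.1 (Finset.mem_coe.1 hT)
    obtain ⟨b, c⟩ := bc
    simp only [patternClass, Finset.coe_filter, Finset.mem_powerset, Set.mem_ofPred_eq]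
    have hxT : x ∉ T := fun h => by simpa using hT' h
    have hyT : y ∉ T := fun h => by simpa using hT' h
    refine ⟨Finset.union_subset (hT'.trans Finset.sdiff_subset) ?_, ?_, ?_⟩ <;>
      cases b <;> cases c <;> simp [hx, hy, hxT, hyT, hxy, hxy.symm, Finset.insert_subset_iff]
  · intro S hS
    simp only [patternClass, Finset.coe_filter, Finset.mem_powerset, Set.mem_ofPred_eq] at hS
    obtain ⟨-, h1, h2⟩ := hS
    obtain ⟨b, c⟩ := bc
    ext a
    by_cases hax : a = x <;> by_cases hay : a = y <;> cases b <;> cases c <;> simp_all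
  · intro T hT
    have hT' : T ⊆ Q \ {x, y} := Finset.mem_powerset.1 (Finset.mem_coe.1 hT)
    obtain ⟨b, c⟩ := bc
    have hxT : x ∉ T := fun h => by simpa using hT' h
    have hyT : y ∉ T := fun h => by simpa using hT' h
    ext a
    by_cases hax : a = x <;> by_cases hay : a = y <;> cases b <;> cases c <;> simp_all

lemma disjoint_patternClass {α : Type*} [DecidableEq α] (Q : Finset α) (x y : α)
    {b c : Bool × Bool} (h : b ≠ c) :
    Disjoint (patternClass Q x y b) (patternClass Q x y c) := by
  rw [Finset.disjoint_left]
  intro S hb hc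
  simp only [patternClass, Finset.mem_filter] at hb hc
  exact h (Prod.ext (Bool.eq_iff_iff.2 (hb.2.1.symm.trans hc.2.1))
    (Bool.eq_iff_iff.2 (hb.2.2.symm.trans hc.2.2)))


/-- Let `Q` be a finite set with `n ≥ 4` elements and `x ≠ y` two
elements of `Q`. The power set of `Q` is partitioned into the four classes determined
by membership of `x` and `y`; each class has `2 ^ (n - 2)` members. Suppose
`A 0, A 1 ⊆ P(Q)` are each a union of some of these four classes (expressed by: whether
`S ∈ A i` depends only on the membership pattern of `x, y` in `S`), and suppose they
cover the left-deep plan space: for every duplicate-free list `L` enumerating `Q`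
there is an `i` such that every prefix of `L` with at least two elements has its
element set in `A i`. Then for some `i`, `A i` contains at least three of the four
classes; in particular `max |A 0| |A 1| ≥ 3 * 2 ^ (n - 2)`. -/
theorem linear_partitioning_lower_bound {α : Type*} [DecidableEq α]
    (Q : Finset α) (n : ℕ) (hn : Q.card = n) (hn4 : 4 ≤ n)
    (x y : α) (hx : x ∈ Q) (hy : y ∈ Q) (hxy : x ≠ y)
    (A : Fin 2 → Finset (Finset α))
    (hsub : ∀ i, A i ⊆ Q.powerset)
    (hclass : ∀ i, ∀ S ∈ Q.powerset, ∀ T ∈ Q.powerset,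
      ((x ∈ S) ↔ (x ∈ T)) → ((y ∈ S) ↔ (y ∈ T)) → (S ∈ A i ↔ T ∈ A i))
    (hcover : ∀ L : List α, L.Nodup → (∀ a, a ∈ L ↔ a ∈ Q) →
      ∃ i, ∀ p : List α, p <+: L → 2 ≤ p.length → p.toFinset ∈ A i) :
    (∀ bc : Bool × Bool,
      (Q.powerset.filter
        (fun S => ((x ∈ S) ↔ bc.1 = true) ∧ ((y ∈ S) ↔ bc.2 = true))).card
        = 2 ^ (n - 2))
    ∧ ∃ i, 3 ≤ ((Finset.univ : Finset (Bool × Bool)).filter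
          (fun bc => Q.powerset.filter
            (fun S => ((x ∈ S) ↔ bc.1 = true) ∧ ((y ∈ S) ↔ bc.2 = true)) ⊆ A i)).card
        ∧ 3 * 2 ^ (n - 2) ≤ (A i).card := by
  change (∀ bc, (patternClass Q x y bc).card = _) ∧ ∃ i,
    3 ≤ (Finset.univ.filter (fun bc => patternClass Q x y bc ⊆ A i)).card ∧ _
  have hcard : ∀ bc, (patternClass Q x y bc).card = 2 ^ (n - 2) := fun bc =>
    hn ▸ card_patternClass Q x y hx hy hxy bc
  refine ⟨hcard, ?_⟩
  have hR : 2 ≤ (Q \ {x, y}).toList.length := by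
    rw [Finset.length_toList, Finset.card_sdiff_of_subset
      (by simp [Finset.insert_subset_iff, hx, hy]), Finset.card_pair hxy]
    omega
  have hnd := (Q \ {x, y}).nodup_toList
  have hmem : ∀ z, z ∈ (Q \ {x, y}).toList ↔ z ∈ Q ∧ z ≠ x ∧ z ≠ y := by simp
  obtain ⟨a, b, l, hl⟩ : ∃ a b l, (Q \ {x, y}).toList = a :: b :: l := by
    match h : (Q \ {x, y}).toList, hR with
    | a :: b :: l, _ => exact ⟨a, b, l, rfl⟩
  rw [hl] at hnd hmem
  obtain ⟨haQ, hax, hay⟩ := (hmem a).1 (by simp)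
  obtain ⟨hbQ, hbx, hby⟩ := (hmem b).1 (by simp)
  have hxl : x ∉ l := fun h => ((hmem x).1 (by simp [h])).2.1 rfl
  have hyl : y ∉ l := fun h => ((hmem y).1 (by simp [h])).2.2 rfl
  obtain ⟨i, hi⟩ := hcover (a :: b :: x :: y :: l) (by
      simp only [List.nodup_cons, List.mem_cons, not_or] at hnd ⊢
      tauto) (by
      intro z
      have := hmem z
      simp only [List.mem_cons] at this ⊢
      by_cases hzx : z = x
      · simp [hzx, hx]
      by_cases hzy : z = y
      · simp [hzy, hy]
      tauto)
  have key : ∀ S ⊆ Q, S ∈ A i → patternClass Q x y (decide (x ∈ S), decide (y ∈ S)) ⊆ A i := by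
    intro S hSQ hS T hT
    simp only [patternClass, Finset.mem_filter, decide_eq_true_eq] at hT
    exact (hclass i T hT.1 S (Finset.mem_powerset.2 hSQ) hT.2.1 hT.2.2).2 hS
  have k1 := key _ (by simp [Finset.insert_subset_iff, *]) (hi [a, b] ⟨x :: y :: l, rfl⟩ (by simp))
  have k2 := key _ (by simp [Finset.insert_subset_iff, *]) (hi [a, b, x] ⟨y :: l, rfl⟩ (by simp))
  have k3 := key _ (by simp [Finset.insert_subset_iff, *]) (hi [a, b, x, y] ⟨l, rfl⟩ (by simp))
  simp [hax.symm, hay.symm, hbx.symm, hby.symm, hxy.symm] at k1 k2 k3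
  have h3 : 3 ≤ (Finset.univ.filter (fun bc => patternClass Q x y bc ⊆ A i)).card := by
    have hs : ({(false, false), (true, false), (true, true)} : Finset (Bool × Bool)) ⊆
        Finset.univ.filter (fun bc => patternClass Q x y bc ⊆ A i) := by
      simp [Finset.insert_subset_iff, k1, k2, k3]
    exact Finset.card_le_card hs
  refine ⟨i, h3, ?_⟩
  calc 3 * 2 ^ (n - 2)
      ≤ (Finset.univ.filter (fun bc => patternClass Q x y bc ⊆ A i)).card * 2 ^ (n - 2) :=
        Nat.mul_le_mul_right _ h3
    _ = ((Finset.univ.filter (fun bc => patternClass Q x y bc ⊆ A i)).biUnion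
          (patternClass Q x y)).card := by
        rw [Finset.card_biUnion (fun _ _ _ _ h => disjoint_patternClass Q x y h),
          Finset.sum_congr rfl (fun bc _ => hcard bc), Finset.sum_const, smul_eq_mul]
    _ ≤ (A i).card := Finset.card_le_card
        (Finset.biUnion_subset.2 fun bc h => (Finset.mem_filter.1 h).2)
end
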